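/- arXiv:2112.10856 — 2 statements merged into one kernel-verified Lean document; each statement's English description precedes it below -/
import Mathlib

section
/- Let A be an n×n complex matrix of rank r. Let {f_1,...,f_{n-r}} be an orthonormal basis-type subset of N(A), {g_1,...,g_{n-r}} an orthonormal subset of N(A*), and d_1,...,d_{n-r} nonzero scalars. Then A + ∑_{k=1}^{n-r} d_k g_k f_k* is invertible and A† = (A + ∑_{k=1}^{n-r} d_k g_k f_k*)^{-1} − ∑_{k=1}^{n-r} (1/d_k) f_k g_k*. -/
noncomputable section
open Matrix

/-- `X` is the Moore–Penrose inverse of the complex matrix `A`. -/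
def IsMP {m n : ℕ} (A : Matrix (Fin m) (Fin n) ℂ) (X : Matrix (Fin n) (Fin m) ℂ) : Prop :=
  A * X * A = A ∧ X * A * X = X ∧ (A * X)ᴴ = A * X ∧ (X * A)ᴴ = X * A

theorem trace_idem_rank {n : ℕ} (P : Matrix (Fin n) (Fin n) ℂ) (h : P * P = P) :
    P.trace = (P.rank : ℂ) := by
  have hi : IsIdempotentElem (Matrix.toLin' P) := by
    unfold IsIdempotentElem
    rw [Module.End.mul_eq_comp, ← Matrix.toLin'_mul, h]
  rw [← Matrix.trace_toLin'_eq, (LinearMap.IsIdempotentElem.isProj_range _ hi).trace]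
  rfl

theorem main_aux {n r : ℕ} (A : Matrix (Fin n) (Fin n) ℂ) (hr : A.rank = r)
    (F G : Matrix (Fin n) (Fin (n - r)) ℂ) (hF : Fᴴ * F = 1) (hG : Gᴴ * G = 1)
    (hAF : A * F = 0) (hAG : Aᴴ * G = 0) (D E : Matrix (Fin (n - r)) (Fin (n - r)) ℂ)
    (hDE : D * E = 1) (X : Matrix (Fin n) (Fin n) ℂ) (hX : IsMP A X) :
    (A + G * D * Fᴴ) * (X + F * E * Gᴴ) = 1 := by
  obtain ⟨h1, h2, h3, h4⟩ := hX
  have hGA : Gᴴ * A = 0 := by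
    have := congrArg conjTranspose hAG
    simpa using this
  have hFX : Fᴴ * X = 0 := by
    have : Fᴴ * (X * A) = 0 := by
      rw [← h4, ← conjTranspose_mul, Matrix.mul_assoc, hAF]; simp
    rw [← h2, ← Matrix.mul_assoc, this, Matrix.zero_mul]
  have hAXi : (A * X) * (A * X) = A * X := by
    rw [← Matrix.mul_assoc, h1]
  have hAXG : A * X * G = 0 := by
    rw [← h3, conjTranspose_mul, Matrix.mul_assoc, hAG, Matrix.mul_zero]
  have hrk : (A * X).rank = r := by
    apply le_antisymm
    · rw [← hr]; exact rank_mul_le_left A X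
    · rw [← hr]
      conv_lhs => rw [← h1]
      exact rank_mul_le_left (A * X) A
  have hrn : r ≤ n := by
    rw [← hr]; simpa using A.rank_le_width
  have hi : (A * X + G * Gᴴ) * (A * X + G * Gᴴ) = A * X + G * Gᴴ := by
    have e1 : (A * X) * (G * Gᴴ) = 0 := by
      rw [← Matrix.mul_assoc, hAXG, Matrix.zero_mul]
    have e2 : (G * Gᴴ) * (A * X) = 0 := by
      rw [Matrix.mul_assoc, ← Matrix.mul_assoc Gᴴ, hGA]; simp
    have e3 : (G * Gᴴ) * (G * Gᴴ) = G * Gᴴ := by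
      rw [Matrix.mul_assoc, ← Matrix.mul_assoc Gᴴ, hG, Matrix.one_mul]
    rw [add_mul, mul_add, mul_add, hAXi, e1, e2, e3]; simp
  have hP : A * X + G * Gᴴ = 1 := by
    have hq : IsIdempotentElem (1 - (A * X + G * Gᴴ)) := IsIdempotentElem.one_sub hi
    have ht : (1 - (A * X + G * Gᴴ)).trace = 0 := by
      rw [trace_sub, trace_add, trace_idem_rank _ hAXi, hrk, trace_mul_comm G, hG,
        trace_one, trace_one, Fintype.card_fin, Fintype.card_fin, Nat.cast_sub hrn]
      ring
    rw [trace_idem_rank _ hq] at ht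
    have h0 : (1 - (A * X + G * Gᴴ)).rank = 0 := by exact_mod_cast ht
    unfold Matrix.rank at h0
    rw [Submodule.finrank_eq_zero, LinearMap.range_eq_bot] at h0
    replace h0 : 1 - (A * X + G * Gᴴ) = 0 := Matrix.toLin'.injective (by rw [map_zero]; exact h0)
    exact (sub_eq_zero.mp h0).symm
  have c1 : A * (F * E * Gᴴ) = 0 := by
    rw [Matrix.mul_assoc, ← Matrix.mul_assoc, hAF, Matrix.zero_mul]
  have c2 : G * D * Fᴴ * X = 0 := by
    rw [Matrix.mul_assoc, hFX, Matrix.mul_zero]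
  have c3 : G * D * Fᴴ * (F * E * Gᴴ) = G * Gᴴ := by
    calc _ = G * (D * ((Fᴴ * F) * E)) * Gᴴ := by simp only [Matrix.mul_assoc]
      _ = _ := by rw [hF, Matrix.one_mul, hDE, Matrix.mul_one]
  rw [add_mul, mul_add, mul_add, c1, c2, c3, add_zero, zero_add, hP]

theorem sum_aux {n m : ℕ} (u v : Fin m → Fin n → ℂ) (d : Fin m → ℂ) :
    ∑ k, d k • vecMulVec (u k) (star (v k)) =
      (of u)ᵀ * diagonal d * ((of v)ᵀ)ᴴ := by
  ext i j
  rw [Matrix.mul_apply]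
  simp only [Matrix.sum_apply, Matrix.smul_apply, vecMulVec_apply,
    mul_diagonal, transpose_apply, of_apply, conjTranspose_apply, Pi.star_apply, smul_eq_mul]
  exact Finset.sum_congr rfl fun k _ => by ring

theorem orth_aux {n m : ℕ} (u : Fin m → Fin n → ℂ)
    (h : ∀ k l, star (u k) ⬝ᵥ u l = if k = l then 1 else 0) :
    ((of u)ᵀ)ᴴ * (of u)ᵀ = 1 := by
  ext k l
  rw [Matrix.one_apply, ← h k l]
  rfl

theorem ker_aux {n m : ℕ} (A : Matrix (Fin n) (Fin n) ℂ) (u : Fin m → Fin n → ℂ)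
    (h : ∀ k, A.mulVec (u k) = 0) : A * (of u)ᵀ = 0 := by
  ext i k
  exact congrFun (h k) i

theorem stmt11 {n r : ℕ} (A : Matrix (Fin n) (Fin n) ℂ) (hr : A.rank = r)
    (f : Fin (n - r) → Fin n → ℂ) (g : Fin (n - r) → Fin n → ℂ)
    (hf : ∀ k l, star (f k) ⬝ᵥ f l = if k = l then 1 else 0)
    (hg : ∀ k l, star (g k) ⬝ᵥ g l = if k = l then 1 else 0)
    (hfN : ∀ k, A.mulVec (f k) = 0) (hgN : ∀ k, Aᴴ.mulVec (g k) = 0)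
    (d : Fin (n - r) → ℂ) (hd : ∀ k, d k ≠ 0)
    (X : Matrix (Fin n) (Fin n) ℂ) (hX : IsMP A X) :
    IsUnit (A + ∑ k, d k • vecMulVec (g k) (star (f k))) ∧
    X = (A + ∑ k, d k • vecMulVec (g k) (star (f k)))⁻¹ -
      ∑ k, (d k)⁻¹ • vecMulVec (f k) (star (g k)) := by
  have key := main_aux A hr (of f)ᵀ (of g)ᵀ (orth_aux f hf) (orth_aux g hg)
    (ker_aux A f hfN) (ker_aux Aᴴ g hgN) (diagonal d) (diagonal fun k => (d k)⁻¹)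
    (by
      rw [diagonal_mul_diagonal, ← diagonal_one]
      congr 1
      funext k
      exact mul_inv_cancel₀ (hd k)) X hX
  rw [← sum_aux, ← sum_aux] at key
  refine ⟨IsUnit.of_mul_eq_one _ key, ?_⟩
  rw [Matrix.inv_eq_right_inv key, add_sub_cancel_right]
end
end

section
/- Let A and B be m×n complex matrices with R(B*) = N(A). Then A*A + B*B is invertible and A† is the unique solution X of the equation (A*A + B*B) X = A*. -/
noncomputable section
open Matrix

theorem stmt12 {m n : ℕ} (A B : Matrix (Fin m) (Fin n) ℂ)
    (hRB : LinearMap.range Bᴴ.mulVecLin = LinearMap.ker A.mulVecLin)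
    (G : Matrix (Fin n) (Fin m) ℂ) (hG : IsMP A G) :
    IsUnit (Aᴴ * A + Bᴴ * B) ∧
    ∀ X : Matrix (Fin n) (Fin m) ℂ, (Aᴴ * A + Bᴴ * B) * X = Aᴴ ↔ X = G := by
  obtain ⟨h1, h2, h3, h4⟩ := hG
  have hAB : A * Bᴴ = 0 := by
    apply Matrix.ext_of_mulVec_single
    intro i
    have : Bᴴ.mulVecLin (Pi.single i 1) ∈ LinearMap.ker A.mulVecLin := by
      rw [← hRB]; exact ⟨_, rfl⟩
    rw [LinearMap.mem_ker, Matrix.mulVecLin_apply, Matrix.mulVecLin_apply,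
      Matrix.mulVec_mulVec] at this
    rw [this, Matrix.zero_mulVec]
  have hBA : B * Aᴴ = 0 := by
    have := congrArg Matrix.conjTranspose hAB
    simpa [Matrix.conjTranspose_mul] using this
  have hU : IsUnit (Aᴴ * A + Bᴴ * B) := by
    rw [← Matrix.mulVec_injective_iff_isUnit]
    rw [← Matrix.coe_mulVecLin, ← LinearMap.ker_eq_bot, LinearMap.ker_eq_bot']
    intro v hv
    rw [Matrix.mulVecLin_apply] at hv
    have e1 : (A * Aᴴ) *ᵥ (A *ᵥ v) = 0 := by
      have h := congrArg (fun w => A *ᵥ w) hv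
      simp only [Matrix.mulVec_mulVec, Matrix.mulVec_zero, Matrix.mul_add] at h
      rw [← Matrix.mul_assoc A Bᴴ B, hAB, Matrix.zero_mul, add_zero, ← Matrix.mul_assoc] at h
      rw [Matrix.mulVec_mulVec, h]
    have e2 : A *ᵥ v = 0 := by
      open scoped ComplexOrder in
      rw [Matrix.self_mul_conjTranspose_mulVec_eq_zero, Matrix.mulVec_mulVec,
        Matrix.conjTranspose_mul_self_mulVec_eq_zero] at e1
      exact e1
    have e3 : B *ᵥ v = 0 := by
      open scoped ComplexOrder in
      rw [Matrix.add_mulVec, ← Matrix.mulVec_mulVec, e2, Matrix.mulVec_zero, zero_add,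
        Matrix.conjTranspose_mul_self_mulVec_eq_zero] at hv
      exact hv
    have e4 : v ∈ LinearMap.range Bᴴ.mulVecLin := by
      rw [hRB]; exact e2
    obtain ⟨w, rfl⟩ := e4
    rw [Matrix.mulVecLin_apply] at e3 ⊢
    open scoped ComplexOrder in
    rw [Matrix.mulVec_mulVec, Matrix.self_mul_conjTranspose_mulVec_eq_zero] at e3
    exact e3
  have hBG : B * G = 0 := by
    rw [← h2, ← h4, Matrix.conjTranspose_mul, ← Matrix.mul_assoc, ← Matrix.mul_assoc, hBA]
    simp
  have hAG : Aᴴ * A * G = Aᴴ := by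
    rw [Matrix.mul_assoc, ← h3, ← Matrix.conjTranspose_mul, h1]
  have hS : (Aᴴ * A + Bᴴ * B) * G = Aᴴ := by
    rw [Matrix.add_mul, hAG, Matrix.mul_assoc, hBG, Matrix.mul_zero, add_zero]
  refine ⟨hU, fun X => ⟨fun hX => ?_, fun hX => hX ▸ hS⟩⟩
  have hd := (Matrix.isUnit_iff_isUnit_det _).1 hU
  have hXG := hX.trans hS.symm
  have h := congrArg (fun Y => (Aᴴ * A + Bᴴ * B)⁻¹ * Y) hXG
  simpa only [Matrix.nonsing_inv_mul_cancel_left _ _ hd] using h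
end
end
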